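/- Let c_imp > c_exp and f(x) = c_imp·max(x,0) + c_exp·min(x,0). If x_1, …, x_n are real numbers such that x_i > 0 and x_j < 0 for some indices i, j (i.e., the power crosses between import and export within the interval), then f((x_1+⋯+x_n)/n) < (f(x_1)+⋯+f(x_n))/n, with strict inequality. -/

import Mathlib

/-!
The cost splits as `c_exp * y + (c_imp - c_exp) * max y 0`, a linear function plus a positive
multiple of the positive part. It is therefore positively homogeneous and subadditive, and
subadditivity is strict as soon as the summands have both signs, because only then does the
positive part lose something to cancellation. Absorbing the weights of an average into the
summands by homogeneity turns strict subadditivity into a strict Jensen inequality.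
-/

theorem max_sum_zero_lt_sum_max_zero {ι M : Type*} [AddCommMonoid M] [LinearOrder M]
    [IsOrderedCancelAddMonoid M] {s : Finset ι} {x : ι → M} {i j : ι}
    (his : i ∈ s) (hjs : j ∈ s) (hi : 0 < x i) (hj : x j < 0) :
    max (∑ k ∈ s, x k) 0 < ∑ k ∈ s, max (x k) 0 :=
  max_lt
    (Finset.sum_lt_sum (fun _ _ => le_max_left _ _) ⟨j, hjs, lt_max_of_lt_right hj⟩)
    (Finset.sum_pos' (fun _ _ => le_max_right _ _) ⟨i, his, lt_max_of_lt_left hi⟩)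

section NetBillingCost

variable {ι R : Type*} [CommRing R] [LinearOrder R]

/-- The instantaneous Net Billing cost of grid power `y`: imports (`0 < y`) are bought at price
`c_imp`, exports (`y < 0`) are sold at price `c_exp`. -/
def netBillingCost (c_imp c_exp y : R) : R :=
  c_imp * max y 0 + c_exp * min y 0

theorem netBillingCost_eq_mul_add_mul_max (c_imp c_exp y : R) :
    netBillingCost c_imp c_exp y = c_exp * y + (c_imp - c_exp) * max y 0 := by
  rw [netBillingCost]
  linear_combination c_exp * max_add_min y 0

variable [IsStrictOrderedRing R]

theorem netBillingCost_mul_of_nonneg (c_imp c_exp : R) {a : R} (ha : 0 ≤ a) (y : R) :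
    netBillingCost c_imp c_exp (a * y) = a * netBillingCost c_imp c_exp y := by
  have hmax : max (a * y) 0 = a * max y 0 := by
    rw [mul_max_of_nonneg _ _ ha, mul_zero]
  rw [netBillingCost_eq_mul_add_mul_max, netBillingCost_eq_mul_add_mul_max, hmax]
  ring

theorem netBillingCost_sum_lt_sum {c_imp c_exp : R} (h : c_exp < c_imp) {s : Finset ι}
    {x : ι → R} {i j : ι} (his : i ∈ s) (hjs : j ∈ s) (hi : 0 < x i) (hj : x j < 0) :
    netBillingCost c_imp c_exp (∑ k ∈ s, x k) < ∑ k ∈ s, netBillingCost c_imp c_exp (x k) :=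
  calc netBillingCost c_imp c_exp (∑ k ∈ s, x k)
      = c_exp * ∑ k ∈ s, x k + (c_imp - c_exp) * max (∑ k ∈ s, x k) 0 :=
        netBillingCost_eq_mul_add_mul_max ..
    _ < c_exp * ∑ k ∈ s, x k + (c_imp - c_exp) * ∑ k ∈ s, max (x k) 0 :=
        add_lt_add_right (mul_lt_mul_of_pos_left (max_sum_zero_lt_sum_max_zero his hjs hi hj)
          (sub_pos.mpr h)) _
    _ = ∑ k ∈ s, netBillingCost c_imp c_exp (x k) := by
        simp only [netBillingCost_eq_mul_add_mul_max, Finset.sum_add_distrib, Finset.mul_sum]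

theorem netBilling_average_strict_general {c_imp c_exp : R} (h : c_exp < c_imp) {s : Finset ι}
    {w x : ι → R} (hw : ∀ k ∈ s, 0 ≤ w k) {i j : ι} (his : i ∈ s) (hjs : j ∈ s)
    (hwi : 0 < w i) (hwj : 0 < w j) (hi : 0 < x i) (hj : x j < 0) :
    netBillingCost c_imp c_exp (∑ k ∈ s, w k * x k) <
      ∑ k ∈ s, w k * netBillingCost c_imp c_exp (x k) :=
  calc netBillingCost c_imp c_exp (∑ k ∈ s, w k * x k)
      < ∑ k ∈ s, netBillingCost c_imp c_exp (w k * x k) :=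
        netBillingCost_sum_lt_sum h his hjs (mul_pos hwi hi) (mul_neg_of_pos_of_neg hwj hj)
    _ = ∑ k ∈ s, w k * netBillingCost c_imp c_exp (x k) :=
        Finset.sum_congr rfl fun k hk => netBillingCost_mul_of_nonneg c_imp c_exp (hw k hk) (x k)

end NetBillingCost

/-- With a strict price spread `c_imp > c_exp`, an import/export crossing within
the interval makes the average-based cost strictly smaller than the average of
the fine-resolution costs. -/
theorem netBilling_average_strict (c_imp c_exp : ℝ) (h : c_exp < c_imp)
    (f : ℝ → ℝ) (hf : ∀ x, f x = c_imp * max x 0 + c_exp * min x 0)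
    (n : ℕ) (x : Fin n → ℝ)
    (i j : Fin n) (hi : 0 < x i) (hj : x j < 0) :
    f ((∑ k, x k) / n) < (∑ k, f (x k)) / n := by
  obtain rfl : f = netBillingCost c_imp c_exp := funext hf
  have hn : 0 < (n : ℝ)⁻¹ := inv_pos.mpr (Nat.cast_pos.mpr i.pos)
  simpa only [div_eq_inv_mul, Finset.mul_sum] using netBilling_average_strict_general h
    (fun _ _ => hn.le) (Finset.mem_univ i) (Finset.mem_univ j) hn hn hi hj
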